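/- There is a constant C = C(d) > 0 such that for every u₀ ∈ L²(ℝ^d), every T > 0 and every r > 0, the heat solution u with initial datum u₀ (which is smooth in x for t>0) satisfies (Σ_{n∈ℤ^d} (sup_{x∈Q_r(rn)} |∇_x u(T,x)|)² )^{1/2} ≤ C (1 + (T r^{-2})^{d/4}) T^{-d/4 − 1/2} ‖u₀‖. -/

import Mathlib

open MeasureTheory Filter Topology Metric ENNReal NNReal

noncomputable section

/-- `sinc` with value 1 at 0. -/
def sinc' (x : ℝ) : ℝ := if x = 0 then 1 else Real.sin x / x

/-- The function `f_{N,n}(x) = ∏_j sin (π (N x_j - n_j)) / (π (N x_j - n_j))`. -/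
def fN (d : ℕ) (N : ℝ) (n : Fin d → ℤ) (x : EuclideanSpace ℝ (Fin d)) : ℝ :=
  ∏ j, sinc' (Real.pi * (N * x j - n j))

/-- The lattice point `n / N` in `ℝ^d`. -/
def latticePt (d : ℕ) (N : ℝ) (n : Fin d → ℤ) : EuclideanSpace ℝ (Fin d) :=
  WithLp.toLp 2 fun j => (n j : ℝ) / N

/-- The heat solution at time `t > 0` with initial datum `u₀ ∈ L²(ℝ^d)`:
`u(t,x) = (4πt)^{-d/2} ∫ e^{-|x-y|²/(4t)} u₀(y) dy`. -/
def heatSol (d : ℕ) (u₀ : EuclideanSpace ℝ (Fin d) → ℝ) (t : ℝ)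
    (x : EuclideanSpace ℝ (Fin d)) : ℝ :=
  (4 * Real.pi * t) ^ (-(d : ℝ) / 2) * ∫ y, Real.exp (-‖x - y‖ ^ 2 / (4 * t)) * u₀ y

/-- The family `F` is summable in `L²(ℝ^d)` with sum `g`: the finite partial sums
converge to `g` in the `L²` norm along the filter of finite subsets of `ℤ^d`. -/
def HasSumL2 (d : ℕ) {V : Type} [NormedAddCommGroup V]
    (F : (Fin d → ℤ) → EuclideanSpace ℝ (Fin d) → V)
    (g : EuclideanSpace ℝ (Fin d) → V) : Prop :=
  Tendsto (fun s : Finset (Fin d → ℤ) =>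
    eLpNorm (fun x => g x - ∑ n ∈ s, F n x) 2 volume) atTop (𝓝 0)

/-- The closed cube `Q_r(0)` in `ℝ^d`, centered at the origin, of side length `2r`. -/
def Qcube (d : ℕ) (r : ℝ) : Set (EuclideanSpace ℝ (Fin d)) := {ξ | ∀ j, |ξ j| ≤ r}

/-- The truncated Fourier integral, with the paper's normalization
`(2π)^{-d/2} ∫_{|x| ≤ R} e^{-i x·ξ} f(x) dx`. -/
def truncFT (d : ℕ) (f : EuclideanSpace ℝ (Fin d) → ℂ) (R : ℝ)
    (ξ : EuclideanSpace ℝ (Fin d)) : ℂ :=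
  (((2 * Real.pi) ^ (-(d : ℝ) / 2) : ℝ) : ℂ) *
    ∫ x in closedBall (0 : EuclideanSpace ℝ (Fin d)) R,
      Complex.exp (-(Complex.I * ((inner ℝ x ξ : ℝ) : ℂ))) * f x

/-- `fhat` is the Fourier transform of `f ∈ L²(ℝ^d)` in the `L²` (Plancherel) sense:
`fhat ∈ L²` and the Fourier integrals of the truncations of `f` converge to `fhat`
in the `L²` norm. -/
def IsL2Fourier (d : ℕ) (f fhat : EuclideanSpace ℝ (Fin d) → ℂ) : Prop :=
  MemLp fhat 2 volume ∧
    Tendsto (fun R : ℝ => eLpNorm (fun ξ => fhat ξ - truncFT d f R ξ) 2 volume)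
      atTop (𝓝 0)

/-- The `L²(ℝ^d)` norm of a function, as a real number. -/
def l2norm (d : ℕ) {V : Type} [NormedAddCommGroup V]
    (f : EuclideanSpace ℝ (Fin d) → V) : ℝ :=
  (eLpNorm f 2 volume).toReal

lemma aux_gauss_1d (p q : ℝ) (hp : 0 ≤ p) (hq : 0 ≤ q) (h : |p - q| ≤ 1) :
    |Real.exp (-(p ^ 2 / 4)) - Real.exp (-(q ^ 2 / 4))|
      ≤ Real.exp 1 * |p - q| * Real.exp (-(q ^ 2 / 16)) := by
  have key : ∀ m M : ℝ, 0 ≤ m → m ≤ M → M - m ≤ 1 → q ≤ M →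
      Real.exp (-(m ^ 2 / 4)) - Real.exp (-(M ^ 2 / 4))
        ≤ Real.exp 1 * (M - m) * Real.exp (-(q ^ 2 / 16)) := by
    intro m M hm hmM h1 hqM
    have e1 : Real.exp (-(M ^ 2 / 4)) =
        Real.exp (-(m ^ 2 / 4)) * Real.exp (-((M ^ 2 - m ^ 2) / 4)) := by
      rw [← Real.exp_add]; ring_nf
    have e2 := Real.add_one_le_exp (-((M ^ 2 - m ^ 2) / 4))
    have e3 : Real.exp (-(m ^ 2 / 4)) = Real.exp (-(m ^ 2 / 8)) * Real.exp (-(m ^ 2 / 8)) := by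
      rw [← Real.exp_add]; ring_nf
    have e4 : (m + M) / 4 * Real.exp (-(m ^ 2 / 8)) ≤ 1 := by
      have := Real.add_one_le_exp (m ^ 2 / 8)
      have h2 : (m + M) / 4 ≤ Real.exp (m ^ 2 / 8) := by nlinarith [sq_nonneg (m - 2)]
      calc _ ≤ Real.exp (m ^ 2 / 8) * Real.exp (-(m ^ 2 / 8)) := by gcongr
        _ = 1 := by rw [← Real.exp_add]; simp
    have e5 : Real.exp (-(m ^ 2 / 8)) ≤ Real.exp 1 * Real.exp (-(q ^ 2 / 16)) := by
      rw [← Real.exp_add]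
      apply Real.exp_le_exp.2
      nlinarith [sq_nonneg (m - 1)]
    have hx := Real.exp_pos (-(m ^ 2 / 8))
    calc _ = Real.exp (-(m ^ 2 / 4)) * (1 - Real.exp (-((M ^ 2 - m ^ 2) / 4))) := by
            rw [e1]; ring
      _ ≤ Real.exp (-(m ^ 2 / 4)) * ((M ^ 2 - m ^ 2) / 4) := by gcongr; linarith
      _ = (M - m) * ((m + M) / 4 * Real.exp (-(m ^ 2 / 8))) * Real.exp (-(m ^ 2 / 8)) := by
            rw [e3]; ring
      _ ≤ (M - m) * 1 * Real.exp (-(m ^ 2 / 8)) := by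
            gcongr
      _ ≤ (M - m) * 1 * (Real.exp 1 * Real.exp (-(q ^ 2 / 16))) := by
            gcongr
      _ = _ := by ring
  rcases le_total p q with hpq | hpq
  · have hd : |p - q| = q - p := by rw [abs_of_nonpos (by linarith)]; ring
    rw [hd] at h ⊢
    rw [abs_of_nonneg]
    · exact key p q hp hpq h le_rfl
    · rw [sub_nonneg]; apply Real.exp_le_exp.2; nlinarith
  · have hd : |p - q| = p - q := abs_of_nonneg (by linarith)
    rw [hd] at h ⊢
    rw [abs_sub_comm, abs_of_nonneg]
    · exact key q p hq hpq h hpq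
    · rw [sub_nonneg]; apply Real.exp_le_exp.2; nlinarith

lemma aux_gauss_T {E : Type*} [NormedAddCommGroup E] (T : ℝ) (hT : 0 < T) (x x₀ y : E)
    (h : ‖x - x₀‖ ≤ √T) :
    |Real.exp (-‖x - y‖ ^ 2 / (4 * T)) - Real.exp (-‖x₀ - y‖ ^ 2 / (4 * T))|
      ≤ Real.exp 1 / √T * ‖x - x₀‖ * Real.exp (-(1 / (16 * T)) * ‖x₀ - y‖ ^ 2) := by
  have hs : 0 < √T := Real.sqrt_pos.2 hT
  have hs2 : √T ^ 2 = T := Real.sq_sqrt hT.le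
  have hd : |‖x - y‖ - ‖x₀ - y‖| ≤ ‖x - x₀‖ := by
    have := abs_norm_sub_norm_le (x - y) (x₀ - y)
    simpa using this
  have hd2 : |‖x - y‖ / √T - ‖x₀ - y‖ / √T| = |‖x - y‖ - ‖x₀ - y‖| / √T := by
    rw [← _root_.sub_div, abs_div, abs_of_pos hs]
  have := aux_gauss_1d (‖x - y‖ / √T) (‖x₀ - y‖ / √T) (by positivity) (by positivity)
    (by rw [hd2, div_le_one hs]; exact hd.trans h)
  rw [hd2] at this
  have r1 : ∀ z : ℝ, -((z / √T) ^ 2 / 4) = -z ^ 2 / (4 * T) := by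
    intro z; rw [div_pow, hs2]; field_simp
  have r2 : ∀ z : ℝ, -((z / √T) ^ 2 / 16) = -(1 / (16 * T)) * z ^ 2 := by
    intro z; rw [div_pow, hs2]; field_simp
  rw [r1, r1, r2] at this
  refine this.trans ?_
  calc _ ≤ Real.exp 1 * (‖x - x₀‖ / √T) * Real.exp (-(1 / (16 * T)) * ‖x₀ - y‖ ^ 2) := by gcongr
    _ = _ := by ring

lemma aux_int (d : ℕ) (b : ℝ) (hb : 0 < b) :
    Integrable (fun z : EuclideanSpace ℝ (Fin d) => Real.exp (-b * ‖z‖ ^ 2)) := by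
  by_contra h
  have h1 := GaussianFourier.integral_rexp_neg_mul_sq_norm
    (V := EuclideanSpace ℝ (Fin d)) hb
  rw [integral_undef h] at h1
  have : 0 < (Real.pi / b) ^ ((Module.finrank ℝ (EuclideanSpace ℝ (Fin d)) : ℝ) / 2) := by
    have := Real.pi_pos
    positivity
  linarith

lemma aux_lint (d : ℕ) (b : ℝ) (hb : 0 < b) :
    ∫⁻ z : EuclideanSpace ℝ (Fin d), ENNReal.ofReal (Real.exp (-b * ‖z‖ ^ 2))
      = ENNReal.ofReal ((Real.pi / b) ^ ((d : ℝ) / 2)) := by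
  rw [← ofReal_integral_eq_lintegral_ofReal (aux_int d b hb)
    (Eventually.of_forall fun z => (Real.exp_pos _).le),
    GaussianFourier.integral_rexp_neg_mul_sq_norm hb]
  simp

lemma aux_mul_int (d : ℕ) (b : ℝ) (hb : 0 < b) (u₀ : EuclideanSpace ℝ (Fin d) → ℝ)
    (hu : MemLp u₀ 2 volume) (x : EuclideanSpace ℝ (Fin d)) :
    Integrable (fun y => Real.exp (-b * ‖x - y‖ ^ 2) * u₀ y) := by
  have hm : MemLp (fun y => Real.exp (-b * ‖x - y‖ ^ 2)) 2
      (volume : Measure (EuclideanSpace ℝ (Fin d))) := by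
    rw [memLp_two_iff_integrable_sq (by fun_prop)]
    have := (aux_int d (2 * b) (by positivity)).comp_sub_left x
    refine this.congr (Eventually.of_forall fun y => ?_)
    simp only
    rw [← Real.exp_nat_mul]; congr 1; push_cast; ring
  exact hm.integrable_mul hu

lemma aux_fderiv (d : ℕ) (u₀ : EuclideanSpace ℝ (Fin d) → ℝ)
    (hu : MemLp u₀ 2 volume) (T : ℝ) (hT : 0 < T) (x₀ : EuclideanSpace ℝ (Fin d)) :
    ENNReal.ofReal ‖fderiv ℝ (heatSol d u₀ T) x₀‖ ≤
      ENNReal.ofReal ((4 * Real.pi * T) ^ (-(d : ℝ) / 2) * (Real.exp 1 / √T)) *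
      ∫⁻ y, ENNReal.ofReal (Real.exp (-(1 / (16 * T)) * ‖x₀ - y‖ ^ 2)) * ‖u₀ y‖ₑ := by
  have hpi := Real.pi_pos
  have hs : 0 < √T := Real.sqrt_pos.2 hT
  have hA : 0 ≤ (4 * Real.pi * T) ^ (-(d : ℝ) / 2) := by positivity
  have hI := aux_mul_int d (1 / (16 * T)) (by positivity) u₀ hu x₀
  have hI4 : ∀ x, Integrable (fun y => Real.exp (-‖x - y‖ ^ 2 / (4 * T)) * u₀ y) := by
    intro x
    refine (aux_mul_int d (1 / (4 * T)) (by positivity) u₀ hu x).congr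
      (Eventually.of_forall fun y => ?_)
    simp only
    congr 2; ring
  have h1 : ∫⁻ y, ENNReal.ofReal (Real.exp (-(1 / (16 * T)) * ‖x₀ - y‖ ^ 2)) * ‖u₀ y‖ₑ
      = ENNReal.ofReal (∫ y, ‖Real.exp (-(1 / (16 * T)) * ‖x₀ - y‖ ^ 2) * u₀ y‖) := by
    rw [ofReal_integral_norm_eq_lintegral_enorm hI]
    congr 1; ext y
    rw [enorm_mul, Real.enorm_of_nonneg (Real.exp_pos _).le]
  rw [h1, ← ENNReal.ofReal_mul (by positivity)]
  apply ENNReal.ofReal_le_ofReal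
  apply norm_fderiv_le_of_lip' ℝ (by positivity)
  filter_upwards [Metric.closedBall_mem_nhds x₀ hs] with x hx
  rw [mem_closedBall, dist_eq_norm] at hx
  unfold heatSol
  rw [← mul_sub, ← integral_sub (hI4 x) (hI4 x₀), norm_mul, Real.norm_of_nonneg hA]
  have h2 : ‖∫ y, (Real.exp (-‖x - y‖ ^ 2 / (4 * T)) * u₀ y
      - Real.exp (-‖x₀ - y‖ ^ 2 / (4 * T)) * u₀ y)‖ ≤
      ∫ y, (Real.exp 1 / √T * ‖x - x₀‖) * ‖Real.exp (-(1 / (16 * T)) * ‖x₀ - y‖ ^ 2) * u₀ y‖ := by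
    apply norm_integral_le_of_norm_le (hI.norm.const_mul _)
    refine Eventually.of_forall fun y => ?_
    rw [← sub_mul, norm_mul, norm_mul, Real.norm_of_nonneg (Real.exp_pos _).le, ← mul_assoc]
    gcongr
    exact aux_gauss_T T hT x x₀ y hx
  rw [integral_const_mul] at h2
  calc _ ≤ _ := mul_le_mul_of_nonneg_left h2 hA
    _ = _ := by ring

lemma aux_iSup {α : Type*} (S : Set α) (f : α → ℝ) (A : ℝ≥0∞)
    (h : ∀ x ∈ S, ENNReal.ofReal (f x) ≤ A) : ENNReal.ofReal (⨆ x ∈ S, f x) ≤ A := by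
  by_cases hA : A = ⊤
  · simp [hA]
  rw [ENNReal.ofReal_le_iff_le_toReal hA]
  refine Real.iSup_le (fun x => Real.iSup_le (fun hx => ?_) toReal_nonneg) toReal_nonneg
  exact (ENNReal.ofReal_le_iff_le_toReal hA).1 (h x hx)

lemma aux_CS (d : ℕ) (b : ℝ) (hb : 0 < b) (u₀ : EuclideanSpace ℝ (Fin d) → ℝ)
    (hu : MemLp u₀ 2 volume) (x : EuclideanSpace ℝ (Fin d)) :
    (∫⁻ y, ENNReal.ofReal (Real.exp (-b * ‖x - y‖ ^ 2)) * ‖u₀ y‖ₑ) ^ 2 ≤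
      ENNReal.ofReal ((Real.pi / b) ^ ((d : ℝ) / 2)) *
      ∫⁻ y, ENNReal.ofReal (Real.exp (-b * ‖x - y‖ ^ 2)) * ‖u₀ y‖ₑ ^ 2 := by
  have hum : AEMeasurable (fun y => ‖u₀ y‖ₑ) volume := hu.1.enorm
  have hsq : ∀ y : EuclideanSpace ℝ (Fin d),
      ENNReal.ofReal (Real.exp (-(b / 2) * ‖x - y‖ ^ 2)) ^ 2
      = ENNReal.ofReal (Real.exp (-b * ‖x - y‖ ^ 2)) := by
    intro y
    rw [← ENNReal.ofReal_pow (Real.exp_pos _).le, ← Real.exp_nat_mul]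
    congr 2; push_cast; ring
  have h := ENNReal.lintegral_mul_le_Lp_mul_Lq (volume : Measure (EuclideanSpace ℝ (Fin d)))
    Real.HolderConjugate.two_two
    (f := fun y => ENNReal.ofReal (Real.exp (-(b / 2) * ‖x - y‖ ^ 2)))
    (g := fun y => ENNReal.ofReal (Real.exp (-(b / 2) * ‖x - y‖ ^ 2)) * ‖u₀ y‖ₑ)
    (by fun_prop) (by fun_prop)
  have e1 : ∀ y, ((fun y => ENNReal.ofReal (Real.exp (-(b / 2) * ‖x - y‖ ^ 2))) *
      (fun y => ENNReal.ofReal (Real.exp (-(b / 2) * ‖x - y‖ ^ 2)) * ‖u₀ y‖ₑ)) y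
      = ENNReal.ofReal (Real.exp (-b * ‖x - y‖ ^ 2)) * ‖u₀ y‖ₑ := by
    intro y
    rw [Pi.mul_apply, ← mul_assoc, ← sq, hsq]
  simp only [e1, ENNReal.rpow_two, mul_pow, hsq] at h
  have h3 := lintegral_sub_left_eq_self (μ := volume)
    (fun z : EuclideanSpace ℝ (Fin d) => ENNReal.ofReal (Real.exp (-b * ‖z‖ ^ 2))) x
  rw [h3, aux_lint d b hb] at h
  calc _ ≤ _ := pow_le_pow_left' h 2
    _ = _ := by
      rw [mul_pow, ← ENNReal.rpow_two, ← ENNReal.rpow_two, ← ENNReal.rpow_mul,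
        ← ENNReal.rpow_mul]
      norm_num

def auxBox (d : ℕ) (r : ℝ) (n : Fin d → ℤ) : Set (EuclideanSpace ℝ (Fin d)) :=
  {w | ∀ j, r * n j ≤ w j ∧ w j < r * n j + r}

lemma auxBox_eq (d : ℕ) (r : ℝ) (n : Fin d → ℤ) :
    auxBox d r n = WithLp.ofLp ⁻¹'
      (Set.univ.pi fun j => Set.Ico (r * n j) (r * n j + r) : Set (Fin d → ℝ)) := by
  ext w; simp [auxBox, Set.mem_pi]

lemma auxBox_meas (d : ℕ) (r : ℝ) (n : Fin d → ℤ) : MeasurableSet (auxBox d r n) := by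
  rw [auxBox_eq]
  exact (PiLp.volume_preserving_ofLp (Fin d)).measurable
    (MeasurableSet.univ_pi fun j => measurableSet_Ico)

lemma auxBox_vol (d : ℕ) (r : ℝ) (n : Fin d → ℤ) :
    volume (auxBox d r n) = ENNReal.ofReal r ^ d := by
  rw [auxBox_eq, (PiLp.volume_preserving_ofLp (Fin d)).measure_preimage
    (MeasurableSet.univ_pi fun j => measurableSet_Ico).nullMeasurableSet, Real.volume_pi_Ico]
  simp

lemma auxBox_disj (d : ℕ) (r : ℝ) (hr : 0 < r) :
    Pairwise (Function.onFun Disjoint (auxBox d r)) := by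
  intro m n hmn
  rw [Function.onFun, Set.disjoint_left]
  intro w hm hn
  apply hmn
  ext j
  have key : ∀ k : ℤ, r * k ≤ w j ∧ w j < r * k + r → k = ⌊w j / r⌋ := by
    intro k hk
    symm
    rw [Int.floor_eq_iff, le_div_iff₀ hr, div_lt_iff₀ hr]
    constructor <;> nlinarith [hk.1, hk.2]
  rw [key _ (hm j), key _ (hn j)]

lemma aux_pt (d : ℕ) (T r : ℝ) (hT : 0 < T) (hr : 0 < r) (n : Fin d → ℤ)
    (x w y : EuclideanSpace ℝ (Fin d)) (hx : ∀ j, |x j - r * n j| ≤ r) (hw : w ∈ auxBox d r n) :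
    Real.exp (-(1 / (16 * T)) * ‖x - y‖ ^ 2) ≤
      Real.exp d * Real.exp (-(1 / (32 * max T (r ^ 2))) * ‖w - y‖ ^ 2) := by
  rw [← Real.exp_add]
  apply Real.exp_le_exp.2
  set M := max T (r ^ 2) with hM
  have hM1 : T ≤ M := le_max_left _ _
  have hM2 : r ^ 2 ≤ M := le_max_right _ _
  have hM0 : 0 < M := hT.trans_le hM1
  have hxw : ‖x - w‖ ^ 2 ≤ d * (4 * r ^ 2) := by
    rw [EuclideanSpace.norm_sq_eq]
    calc _ ≤ ∑ j : Fin d, 4 * r ^ 2 := by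
          apply Finset.sum_le_sum
          intro j _
          have h1 := abs_le.1 (hx j)
          have h2 := hw j
          rw [Real.norm_eq_abs, sq_abs, PiLp.sub_apply]
          nlinarith [h1.1, h1.2, h2.1, h2.2]
      _ = _ := by simp
  have htri : ‖w - y‖ ≤ ‖x - w‖ + ‖x - y‖ := by
    have := norm_sub_le_norm_sub_add_norm_sub w x y
    rwa [norm_sub_rev w x] at this
  have h2 : ‖w - y‖ ^ 2 ≤ 2 * ‖x - w‖ ^ 2 + 2 * ‖x - y‖ ^ 2 := by
    nlinarith [sq_nonneg (‖x - w‖ - ‖x - y‖), norm_nonneg (w - y)]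
  have h3 : 1 / (16 * M) * ‖x - y‖ ^ 2 ≤ 1 / (16 * T) * ‖x - y‖ ^ 2 := by gcongr
  have h4 : 1 / (32 * M) * ‖w - y‖ ^ 2 ≤
      1 / (32 * M) * (2 * (d * (4 * M)) + 2 * ‖x - y‖ ^ 2) := by
    gcongr
    calc _ ≤ _ := h2
      _ ≤ 2 * (d * (4 * r ^ 2)) + 2 * ‖x - y‖ ^ 2 := by gcongr
      _ ≤ _ := by gcongr
  have h5 : 1 / (32 * M) * (2 * (d * (4 * M)) + 2 * ‖x - y‖ ^ 2) =
      d / 4 + 1 / (16 * M) * ‖x - y‖ ^ 2 := by field_simp; ring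
  have h6 : (0 : ℝ) ≤ d := by positivity
  linarith

lemma aux_box_avg (d : ℕ) (u₀ : EuclideanSpace ℝ (Fin d) → ℝ)
    (T r : ℝ) (hT : 0 < T) (hr : 0 < r) (n : Fin d → ℤ)
    (x : EuclideanSpace ℝ (Fin d)) (hx : ∀ j, |x j - r * n j| ≤ r) :
    ∫⁻ y, ENNReal.ofReal (Real.exp (-(1 / (16 * T)) * ‖x - y‖ ^ 2)) * ‖u₀ y‖ₑ ^ 2 ≤
      ENNReal.ofReal (Real.exp d / r ^ d) * ∫⁻ w in auxBox d r n,
        ∫⁻ y, ENNReal.ofReal (Real.exp (-(1 / (32 * max T (r ^ 2))) * ‖w - y‖ ^ 2))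
          * ‖u₀ y‖ₑ ^ 2 := by
  set I := ∫⁻ y, ENNReal.ofReal (Real.exp (-(1 / (16 * T)) * ‖x - y‖ ^ 2)) * ‖u₀ y‖ₑ ^ 2
  have h1 : ∀ w ∈ auxBox d r n, I ≤ ENNReal.ofReal (Real.exp d) *
      ∫⁻ y, ENNReal.ofReal (Real.exp (-(1 / (32 * max T (r ^ 2))) * ‖w - y‖ ^ 2))
          * ‖u₀ y‖ₑ ^ 2 := by
    intro w hw
    rw [← lintegral_const_mul' _ _ ofReal_ne_top]
    apply lintegral_mono
    intro y
    simp only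
    rw [← mul_assoc, ← ENNReal.ofReal_mul (Real.exp_pos _).le]
    gcongr
    exact aux_pt d T r hT hr n x w y hx hw
  have h2 := setLIntegral_mono' (μ := volume) (auxBox_meas d r n) h1
  rw [setLIntegral_const, auxBox_vol, lintegral_const_mul' _ _ ofReal_ne_top] at h2
  have hr0 : ENNReal.ofReal r ^ d ≠ 0 := by
    simp [hr]
  have hrt : ENNReal.ofReal r ^ d ≠ ⊤ := by simp
  rw [ENNReal.ofReal_div_of_pos (by positivity), ENNReal.ofReal_pow hr.le, div_eq_mul_inv,
    mul_right_comm, ← div_eq_mul_inv]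
  rwa [ENNReal.le_div_iff_mul_le (Or.inl hr0) (Or.inl hrt)]

lemma aux_sum (d : ℕ) (u₀ : EuclideanSpace ℝ (Fin d) → ℝ) (hu : MemLp u₀ 2 volume)
    (b r : ℝ) (hb : 0 < b) (hr : 0 < r) :
    ∑' n : Fin d → ℤ, ∫⁻ w in auxBox d r n,
        ∫⁻ y, ENNReal.ofReal (Real.exp (-b * ‖w - y‖ ^ 2)) * ‖u₀ y‖ₑ ^ 2 ≤
      ENNReal.ofReal ((Real.pi / b) ^ ((d : ℝ) / 2)) * eLpNorm u₀ 2 volume ^ 2 := by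
  rw [← lintegral_iUnion (auxBox_meas d r) (auxBox_disj d r hr)]
  refine (setLIntegral_le_lintegral _ _).trans ?_
  have hum : AEMeasurable (fun y => ‖u₀ y‖ₑ) volume := hu.1.enorm
  have hum2 : AEMeasurable (fun p : EuclideanSpace ℝ (Fin d) × EuclideanSpace ℝ (Fin d) =>
      ‖u₀ p.2‖ₑ) (volume.prod volume) := hum.comp_snd
  rw [lintegral_lintegral_swap]
  · have h3 : ∀ y, ∫⁻ w, ENNReal.ofReal (Real.exp (-b * ‖w - y‖ ^ 2)) * ‖u₀ y‖ₑ ^ 2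
        = ENNReal.ofReal ((Real.pi / b) ^ ((d : ℝ) / 2)) * ‖u₀ y‖ₑ ^ 2 := by
      intro y
      rw [lintegral_mul_const _ (by fun_prop), lintegral_sub_right_eq_self (μ := volume)
        (fun z : EuclideanSpace ℝ (Fin d) => ENNReal.ofReal (Real.exp (-b * ‖z‖ ^ 2))) y,
        aux_lint d b hb]
    simp only [h3]
    rw [lintegral_const_mul' _ _ ofReal_ne_top,
      eLpNorm_eq_lintegral_rpow_enorm_toReal (by norm_num) (by norm_num), ← ENNReal.rpow_two,
      ← ENNReal.rpow_mul]
    simp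
  · unfold Function.uncurry
    fun_prop

lemma aux_const (d : ℕ) (T r : ℝ) (hT : 0 < T) (hr : 0 < r) :
    ((4 * Real.pi * T) ^ (-(d : ℝ) / 2) * (Real.exp 1 / √T)) ^ 2 *
      (Real.pi / (1 / (16 * T))) ^ ((d : ℝ) / 2) * (Real.exp d / r ^ d) *
      (Real.pi / (1 / (32 * max T (r ^ 2)))) ^ ((d : ℝ) / 2) ≤
    (((4 * Real.pi) ^ (-(d : ℝ) / 2) * Real.exp 1 * (16 * Real.pi) ^ ((d : ℝ) / 4)
      * Real.exp d * (32 * Real.pi) ^ ((d : ℝ) / 4)) *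
      (1 + (T * r ^ (-(2 : ℝ))) ^ ((d : ℝ) / 4)) * T ^ (-(d : ℝ) / 4 - 1 / 2)) ^ 2 := by
  have hpi := Real.pi_pos
  set M := max T (r ^ 2) with hM
  have hM0 : 0 < M := hT.trans_le (le_max_left _ _)
  have q : ∀ z : ℝ, 0 < z → z ^ ((d : ℝ) / 2) = (z ^ ((d : ℝ) / 4)) ^ 2 := by
    intro z hz
    rw [← Real.rpow_natCast, ← Real.rpow_mul hz.le]; congr 1; push_cast; ring
  have hMr : M ^ ((d : ℝ) / 2) / r ^ d ≤ (1 + (T * r ^ (-(2 : ℝ))) ^ ((d : ℝ) / 4)) ^ 2 := by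
    have e1 : r ^ d = (r ^ 2) ^ ((d : ℝ) / 2) := by
      rw [← Real.rpow_natCast r 2, ← Real.rpow_mul hr.le, ← Real.rpow_natCast]
      congr 1; push_cast; ring
    have e2 : r ^ (-(2 : ℝ)) = (r ^ 2)⁻¹ := by
      rw [Real.rpow_neg hr.le, Real.rpow_two]
    rw [e1, ← Real.div_rpow hM0.le (by positivity), q _ (by positivity), e2, ← div_eq_mul_inv]
    have hp : 0 ≤ (T / r ^ 2) ^ ((d : ℝ) / 4) := by positivity
    gcongr
    rcases le_total T (r ^ 2) with h | h
    · rw [hM, max_eq_right h, div_self (by positivity), Real.one_rpow]; linarith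
    · rw [hM, max_eq_left h]; linarith
  have hTT : (T ^ (-(d : ℝ) / 2) / √T) ^ 2 * T ^ ((d : ℝ) / 2) = (T ^ (-(d : ℝ) / 4 - 1 / 2)) ^ 2 := by
    rw [q T hT, ← mul_pow]
    congr 1
    rw [Real.sqrt_eq_rpow, ← Real.rpow_sub hT, ← Real.rpow_add hT]
    congr 1; ring
  have hE : Real.exp d ≤ Real.exp d ^ 2 := by
    rw [sq]; exact le_mul_of_one_le_left (Real.exp_pos _).le (Real.one_le_exp (by positivity))
  have f1 : Real.pi / (1 / (16 * T)) = (16 * Real.pi) * T := by field_simp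
  have f2 : Real.pi / (1 / (32 * M)) = (32 * Real.pi) * M := by field_simp
  rw [f1, f2, Real.mul_rpow (by positivity) hT.le, Real.mul_rpow (by positivity) hT.le,
    Real.mul_rpow (by positivity) hM0.le, q (16 * Real.pi) (by positivity),
    q (32 * Real.pi) (by positivity)]
  set A := (4 * Real.pi) ^ (-(d : ℝ) / 2)
  set B := (16 * Real.pi) ^ ((d : ℝ) / 4)
  set D := (32 * Real.pi) ^ ((d : ℝ) / 4)
  calc _ = (A * Real.exp 1 * B * D) ^ 2 * ((T ^ (-(d : ℝ) / 2) / √T) ^ 2 * T ^ ((d : ℝ) / 2)) *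
        Real.exp d * (M ^ ((d : ℝ) / 2) / r ^ d) := by ring
    _ ≤ (A * Real.exp 1 * B * D) ^ 2 * ((T ^ (-(d : ℝ) / 2) / √T) ^ 2 * T ^ ((d : ℝ) / 2)) *
        Real.exp d ^ 2 * (1 + (T * r ^ (-(2 : ℝ))) ^ ((d : ℝ) / 4)) ^ 2 := by gcongr
    _ = _ := by rw [hTT]; ring

/-- There is `C = C(d) > 0` such that for every `u₀ ∈ L²(ℝ^d)`, `T > 0` and `r > 0`,
`(Σ_{n ∈ ℤ^d} (sup_{x ∈ Q_r(rn)} |∇_x u(T,x)|)²)^{1/2}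
  ≤ C (1 + (T r^{-2})^{d/4}) T^{-d/4 - 1/2} ‖u₀‖`. -/
theorem statement9 (d : ℕ) (hd : 0 < d) :
    ∃ C : ℝ, 0 < C ∧
      ∀ u₀ : EuclideanSpace ℝ (Fin d) → ℝ, MemLp u₀ 2 volume →
      ∀ T r : ℝ, 0 < T → 0 < r →
        (∑' n : Fin d → ℤ,
            (ENNReal.ofReal (⨆ x ∈ {x : EuclideanSpace ℝ (Fin d) | ∀ j, |x j - r * n j| ≤ r},
              ‖fderiv ℝ (heatSol d u₀ T) x‖)) ^ 2) ^ ((1 : ℝ) / 2)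
          ≤ ENNReal.ofReal
              (C * (1 + (T * r ^ (-(2 : ℝ))) ^ ((d : ℝ) / 4)) * T ^ (-(d : ℝ) / 4 - 1 / 2)
                * l2norm d u₀) := by
  have hpi := Real.pi_pos
  refine ⟨(4 * Real.pi) ^ (-(d : ℝ) / 2) * Real.exp 1 * (16 * Real.pi) ^ ((d : ℝ) / 4)
      * Real.exp d * (32 * Real.pi) ^ ((d : ℝ) / 4), by positivity, ?_⟩
  intro u₀ hu T r hT hr
  set K := (4 * Real.pi) ^ (-(d : ℝ) / 2) * Real.exp 1 * (16 * Real.pi) ^ ((d : ℝ) / 4)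
      * Real.exp d * (32 * Real.pi) ^ ((d : ℝ) / 4) * (1 + (T * r ^ (-(2 : ℝ))) ^ ((d : ℝ) / 4)) *
      T ^ (-(d : ℝ) / 4 - 1 / 2) with hK
  have hK0 : 0 ≤ K := by positivity
  have hM0 : 0 < max T (r ^ 2) := hT.trans_le (le_max_left _ _)
  set A := (4 * Real.pi * T) ^ (-(d : ℝ) / 2) * (Real.exp 1 / √T) with hA
  have hA0 : 0 ≤ A := by positivity
  set G := (Real.pi / (1 / (16 * T))) ^ ((d : ℝ) / 2) with hG
  have hG0 : 0 ≤ G := by positivity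
  set R := Real.exp d / r ^ d with hR
  have hR0 : 0 ≤ R := by positivity
  set S : (Fin d → ℤ) → ℝ≥0∞ := fun n => ∫⁻ w in auxBox d r n,
        ∫⁻ y, ENNReal.ofReal (Real.exp (-(1 / (32 * max T (r ^ 2))) * ‖w - y‖ ^ 2))
          * ‖u₀ y‖ₑ ^ 2 with hS
  have step : ∀ n : Fin d → ℤ,
      (ENNReal.ofReal (⨆ x ∈ {x : EuclideanSpace ℝ (Fin d) | ∀ j, |x j - r * n j| ≤ r},
              ‖fderiv ℝ (heatSol d u₀ T) x‖)) ^ 2 ≤ ENNReal.ofReal (A ^ 2 * G * R) * S n := by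
    intro n
    have h1 : ENNReal.ofReal (⨆ x ∈ {x : EuclideanSpace ℝ (Fin d) | ∀ j, |x j - r * n j| ≤ r},
              ‖fderiv ℝ (heatSol d u₀ T) x‖) ≤
              (ENNReal.ofReal (A ^ 2 * G * R) * S n) ^ ((1 : ℝ) / 2) := by
      apply aux_iSup
      intro x hx
      have hx' : ∀ j, |x j - r * n j| ≤ r := hx
      rw [one_div, ENNReal.le_rpow_inv_iff (by norm_num), ENNReal.rpow_two]
      calc _ ≤ _ := pow_le_pow_left' (aux_fderiv d u₀ hu T hT x) 2
        _ = ENNReal.ofReal A ^ 2 * (∫⁻ y, ENNReal.ofReal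
              (Real.exp (-(1 / (16 * T)) * ‖x - y‖ ^ 2)) * ‖u₀ y‖ₑ) ^ 2 := by rw [mul_pow]
        _ ≤ ENNReal.ofReal A ^ 2 * (ENNReal.ofReal G * ∫⁻ y, ENNReal.ofReal
              (Real.exp (-(1 / (16 * T)) * ‖x - y‖ ^ 2)) * ‖u₀ y‖ₑ ^ 2) := by
            gcongr
            exact aux_CS d _ (by positivity) u₀ hu x
        _ ≤ ENNReal.ofReal A ^ 2 * (ENNReal.ofReal G * (ENNReal.ofReal R * S n)) := by
            gcongr
            exact aux_box_avg d u₀ T r hT hr n x hx'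
        _ = _ := by
            rw [ENNReal.ofReal_mul (p := A ^ 2 * G) (by positivity),
              ENNReal.ofReal_mul (p := A ^ 2) (by positivity), ENNReal.ofReal_pow hA0]
            ring
    rwa [one_div, ENNReal.le_rpow_inv_iff (by norm_num), ENNReal.rpow_two] at h1
  have hN : ENNReal.ofReal (l2norm d u₀) = eLpNorm u₀ 2 volume := by
    unfold l2norm
    exact ENNReal.ofReal_toReal hu.2.ne
  have total : (∑' n : Fin d → ℤ,
            (ENNReal.ofReal (⨆ x ∈ {x : EuclideanSpace ℝ (Fin d) | ∀ j, |x j - r * n j| ≤ r},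
              ‖fderiv ℝ (heatSol d u₀ T) x‖)) ^ 2) ≤ ENNReal.ofReal (K * l2norm d u₀) ^ 2 := by
    calc _ ≤ ∑' n : Fin d → ℤ, ENNReal.ofReal (A ^ 2 * G * R) * S n := ENNReal.tsum_le_tsum step
      _ = ENNReal.ofReal (A ^ 2 * G * R) * ∑' n : Fin d → ℤ, S n := ENNReal.tsum_mul_left
      _ ≤ ENNReal.ofReal (A ^ 2 * G * R) *
          (ENNReal.ofReal ((Real.pi / (1 / (32 * max T (r ^ 2)))) ^ ((d : ℝ) / 2)) *
            eLpNorm u₀ 2 volume ^ 2) := by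
          gcongr
          exact aux_sum d u₀ hu _ r (by positivity) hr
      _ = ENNReal.ofReal (A ^ 2 * G * R *
            (Real.pi / (1 / (32 * max T (r ^ 2)))) ^ ((d : ℝ) / 2)) * eLpNorm u₀ 2 volume ^ 2 := by
          rw [← mul_assoc, ← ENNReal.ofReal_mul (by positivity)]
      _ ≤ ENNReal.ofReal (K ^ 2) * eLpNorm u₀ 2 volume ^ 2 := by
          gcongr
          exact aux_const d T r hT hr
      _ = _ := by
          rw [ENNReal.ofReal_mul hK0, hN, mul_pow (ENNReal.ofReal K), ENNReal.ofReal_pow hK0]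
  calc _ ≤ (ENNReal.ofReal (K * l2norm d u₀) ^ 2) ^ ((1 : ℝ) / 2) := by gcongr
    _ = _ := by
      rw [← ENNReal.rpow_two, ← ENNReal.rpow_mul]; norm_num
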